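/- Let P be a disjunctive logic program and let x be an atom having exactly ℓ ≥ 3 occurrences in P (counting all occurrences of x in heads, positive bodies and negative bodies of rules of P). Let x₁,…,x_ℓ be fresh atoms not occurring in P, and let P′ be obtained from P by replacing, for each j = 1,…,ℓ, the j-th occurrence of x by x_j, and adding the rules (x_{j+1} ← x_j) for every 1 ≤ j < ℓ together with the rule (x₁ ← x_ℓ). Then P has an answer set if and only if P′ has an answer set. -/

import Mathlib

/-- A rule of a disjunctive logic program: `head` is the (disjunctive) head,
`pos` the positive body atoms and `neg` the (default-negated) negative body atoms. -/
structure Rule (A : Type) where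
  head : Finset A
  pos : Finset A
  neg : Finset A

namespace Rule
variable {A : Type}

/-- A rule is normal if its head contains at most one atom. -/
def isNormal (r : Rule A) : Prop := r.head.card ≤ 1

/-- A rule is disjunctive if its head contains more than one atom. -/
def isDisjunctive (r : Rule A) : Prop := 1 < r.head.card

/-- A rule is negation-free if its negative body is empty. -/
def negFree (r : Rule A) : Prop := r.neg = ∅

/-- A set `M` of atoms satisfies a (negation-free) rule if, whenever all atoms of the
positive body belong to `M`, some head atom belongs to `M`. -/
def satisfiedBy (r : Rule A) (M : Set A) : Prop :=
  (∀ b ∈ r.pos, b ∈ M) → ∃ a ∈ r.head, a ∈ M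

end Rule

/-- The set of atoms occurring in a program. -/
def progAtoms {A : Type} (P : Set (Rule A)) : Set A :=
  {a | ∃ r ∈ P, a ∈ r.head ∨ a ∈ r.pos ∨ a ∈ r.neg}

/-- `M` is a model of the (negation-free) program `P`. -/
def isModel {A : Type} (P : Set (Rule A)) (M : Set A) : Prop :=
  ∀ r ∈ P, r.satisfiedBy M

/-- `M` is a minimal model of the (negation-free) program `P`. -/
def isMinimalModel {A : Type} (P : Set (Rule A)) (M : Set A) : Prop :=
  isModel P M ∧ ∀ M' : Set A, M' ⊂ M → ¬ isModel P M'

/-- The GL reduct of `P` with respect to `M`: remove every rule whose negative body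
meets `M`, and delete the negative bodies of the remaining rules. -/
def reduct {A : Type} (P : Set (Rule A)) (M : Set A) : Set (Rule A) :=
  {r' | ∃ r ∈ P, (∀ c ∈ r.neg, c ∉ M) ∧ r' = ⟨r.head, r.pos, ∅⟩}

/-- An answer set of `P` is a set `M ⊆ Atoms(P)` that is a subset-minimal model
of the reduct `P^M`. -/
def isAnswerSet {A : Type} (P : Set (Rule A)) (M : Set A) : Prop :=
  M ⊆ progAtoms P ∧ isMinimalModel (reduct P M) M

/-- The compulsory atoms `Comp(P)`: the smallest set of atoms such that (i) if
`(w ← not w)` is a rule of `P` then `w` is compulsory, and (ii) if `(b ← a₁,…,aₙ)`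
is a normal negation-free rule of `P` all of whose body atoms are compulsory,
then `b` is compulsory. -/
inductive Compulsory {A : Type} (P : Set (Rule A)) : A → Prop
  | loop (w : A) : (⟨{w}, ∅, {w}⟩ : Rule A) ∈ P → Compulsory P w
  | rule (r : Rule A) (b : A) : r ∈ P → r.head = {b} → r.neg = ∅ →
      (∀ a ∈ r.pos, Compulsory P a) → Compulsory P b

/-- The contingent atoms `Cont(P) = Atoms(P) ∖ Comp(P)`. -/
def ContingentAtoms {A : Type} (P : Set (Rule A)) : Set A :=
  progAtoms P \ {a | Compulsory P a}

/-- A rule of `P` is contingent if its head contains a contingent atom. -/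
def isContingentRule {A : Type} (P : Set (Rule A)) (r : Rule A) : Prop :=
  r ∈ P ∧ ∃ a ∈ r.head, a ∈ ContingentAtoms P

/-- The three parts (head, positive body, negative body) of a rule, in which an atom
can occur; used to enumerate the occurrences of an atom in a program. -/
def occPart {A : Type} (r : Rule A) : Fin 3 → Finset A := ![r.head, r.pos, r.neg]

/-- Replace every occurrence of the atom `x` by the atom `y` in the finite set `s`. -/
def substAtom {A : Type} [DecidableEq A] (x y : A) (s : Finset A) : Finset A :=
  s.image (fun a => if a = x then y else a)

/-!
The cycle rules force every model to contain all copies of `x` or none of them. Writing `C` for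
the set of copies, exchanging `x` against `C` is therefore an inclusion-preserving correspondence,
with inclusion-preserving inverse, between the sets avoiding `C` and the sets avoiding `x` that
contain all or none of `C`. It respects being a model of the reducts, hence also minimality.
-/

section Models

variable {A : Type} {P Q : Set (Rule A)} {M N S : Set A}

theorem mem_progAtoms_of_mem_occPart {r : Rule A} (hr : r ∈ P) {t : Fin 3} {a : A}
    (ha : a ∈ occPart r t) : a ∈ progAtoms P := by
  refine ⟨r, hr, ?_⟩
  fin_cases t
  · exact .inl ha
  · exact .inr (.inl ha)
  · exact .inr (.inr ha)

theorem isModel_reduct_iff :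
    isModel (reduct P M) N ↔
      ∀ r ∈ P, (∀ c ∈ r.neg, c ∉ M) → (∀ b ∈ r.pos, b ∈ N) → ∃ a ∈ r.head, a ∈ N := by
  constructor
  · intro h r hr hneg
    exact h ⟨r.head, r.pos, ∅⟩ ⟨r, hr, hneg, rfl⟩
  · rintro h _ ⟨r, hr, hneg, rfl⟩
    exact h r hr hneg

theorem isModel_reduct_union_iff :
    isModel (reduct (P ∪ Q) M) N ↔ isModel (reduct P M) N ∧ isModel (reduct Q M) N := by
  simp only [isModel_reduct_iff, Set.mem_union, or_imp, forall_and]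

theorem isMinimalModel.subset_of_isModel_inter (hM : isMinimalModel P M)
    (hS : isModel P (M ∩ S)) : M ⊆ S := by
  by_contra hMS
  exact hM.2 _ (Set.inter_ssubset_left_iff.2 hMS) hS

theorem isModel.reduct_inter_progAtoms (hN : isModel (reduct P M) N) :
    isModel (reduct P M) (N ∩ progAtoms P) := by
  rw [isModel_reduct_iff] at hN ⊢
  intro r hr hneg hpos
  obtain ⟨a, ha, haN⟩ := hN r hr hneg fun b hb => (hpos b hb).1
  exact ⟨a, ha, haN, r, hr, .inl ha⟩

theorem isAnswerSet_iff_isMinimalModel : isAnswerSet P M ↔ isMinimalModel (reduct P M) M :=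
  ⟨And.right, fun h => ⟨h.subset_of_isModel_inter h.1.reduct_inter_progAtoms, h⟩⟩

end Models

section Exchange

variable {A : Type} {B C M N : Set A}

/-- `M` is saturated with respect to `C` if it contains all elements of `C` or none of them. -/
def IsSaturated (C M : Set A) : Prop :=
  (M ∩ C).Nonempty → C ⊆ M

/-- Exchange of the block `B` for the block `C` in the set `M`: the elements of `B` are removed
and, if there were any, all of `C` is added. With `B = {x}` this turns interpretations of a
program into interpretations of the program in which `x` is split into the copies `C`, and
`exchange C {x}` goes back. -/
def exchange (B C M : Set A) : Set A :=
  M \ B ∪ {c ∈ C | (M ∩ B).Nonempty}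

theorem exchange_mono (h : M ⊆ N) : exchange B C M ⊆ exchange B C N :=
  Set.union_subset_union (Set.sdiff_subset_sdiff_left h)
    fun _ hc => ⟨hc.1, hc.2.mono (Set.inter_subset_inter_left B h)⟩

theorem disjoint_exchange_left (hBC : Disjoint B C) : Disjoint (exchange B C M) B :=
  Set.disjoint_union_left.2
    ⟨Set.disjoint_sdiff_left, hBC.symm.mono_left fun _ hc => hc.1⟩

theorem exchange_inter_right_nonempty_iff (hC : C.Nonempty) (hMC : Disjoint M C) :
    (exchange B C M ∩ C).Nonempty ↔ (M ∩ B).Nonempty := by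
  constructor
  · rintro ⟨c, ⟨hcM, -⟩ | ⟨-, hMB⟩, hc⟩
    · exact absurd hc (Set.disjoint_left.1 hMC hcM)
    · exact hMB
  · intro hMB
    obtain ⟨c, hc⟩ := hC
    exact ⟨c, .inr ⟨hc, hMB⟩, hc⟩

theorem isSaturated_exchange (hMC : Disjoint M C) : IsSaturated C (exchange B C M) := by
  intro hne c hc
  have hMB := (exchange_inter_right_nonempty_iff (hne.mono Set.inter_subset_right) hMC).1 hne
  exact .inr ⟨hc, hMB⟩

theorem exchange_exchange (hC : C.Nonempty) (hMC : Disjoint M C) (hMB : IsSaturated B M) :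
    exchange C B (exchange B C M) = M := by
  have hdiff : exchange B C M \ C = M \ B := by
    ext a
    have haC : a ∈ M → a ∉ C := fun haM => Set.disjoint_left.1 hMC haM
    simp only [exchange, Set.mem_sdiff, Set.mem_union, Set.mem_ofPred_eq]
    tauto
  have hrestore : {b ∈ B | (M ∩ B).Nonempty} = M ∩ B :=
    Set.Subset.antisymm (fun _ hb => ⟨hMB hb.2 hb.1, hb.1⟩) fun b hb => ⟨hb.2, b, hb⟩
  rw [exchange, hdiff, exchange_inter_right_nonempty_iff hC hMC, hrestore, Set.sdiff_union_inter]

theorem isSaturated_singleton (x : A) (M : Set A) : IsSaturated {x} M := by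
  rintro ⟨_, hM, rfl⟩
  exact Set.singleton_subset_iff.2 hM

theorem ite_mem_exchange_singleton_iff [DecidableEq A] {x y a : A} (hMC : Disjoint M C)
    (ha : a ∉ C) (hy : a = x → y ∈ C) :
    (if a = x then y else a) ∈ exchange {x} C M ↔ a ∈ M := by
  split_ifs with hax
  · subst hax
    have hyC := hy rfl
    have hyM : y ∉ M := Set.disjoint_right.1 hMC hyC
    simp [exchange, hyC, hyM]
  · simp [exchange, ha, hax]

end Exchange

section SplitAtom

variable {A : Type} [DecidableEq A] {P Q : Set (Rule A)} {C M N : Set A} {x : A}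
  {y : Rule A → Fin 3 → A}

/-- The program obtained from `P` by renaming the occurrence of `x` in the part `t` of each rule
`r` to `y r t`, the parts being indexed as in `occPart`. -/
def splitAtom (P : Set (Rule A)) (x : A) (y : Rule A → Fin 3 → A) : Set (Rule A) :=
  {r' | ∃ r ∈ P, r' = ⟨substAtom x (y r 0) r.head, substAtom x (y r 1) r.pos,
    substAtom x (y r 2) r.neg⟩}

/-- `Q` synchronizes `C` if the models of each of its reducts are exactly the sets that are
saturated with respect to `C`. -/
def Synchronizes (Q : Set (Rule A)) (C : Set A) : Prop :=
  ∀ M N, isModel (reduct Q M) N ↔ IsSaturated C N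

theorem self_notMem_substAtom {z : A} {s : Finset A} (h : x ∈ s → z ≠ x) :
    x ∉ substAtom x z s := by
  intro hx
  obtain ⟨a, ha, hax⟩ := Finset.mem_image.1 hx
  split_ifs at hax with hxa
  · exact h (hxa ▸ ha) hax
  · exact hxa hax

theorem forall_mem_splitAtom_iff {p : Rule A → Prop} :
    (∀ r' ∈ splitAtom P x y, p r') ↔
      ∀ r ∈ P, p ⟨substAtom x (y r 0) r.head, substAtom x (y r 1) r.pos,
        substAtom x (y r 2) r.neg⟩ := by
  constructor
  · exact fun h r hr => h _ ⟨r, hr, rfl⟩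
  · rintro h _ ⟨r, hr, rfl⟩
    exact h r hr

theorem isModel_reduct_splitAtom_exchange_iff (hPC : Disjoint (progAtoms P) C)
    (hy : ∀ r ∈ P, ∀ t, x ∈ occPart r t → y r t ∈ C) (hM : Disjoint M C) (hN : Disjoint N C) :
    isModel (reduct (splitAtom P x y) (exchange {x} C M)) (exchange {x} C N) ↔
      isModel (reduct P M) N := by
  have hmem : ∀ r ∈ P, ∀ t, ∀ a ∈ occPart r t, ∀ {K : Set A}, Disjoint K C →
      ((if a = x then y r t else a) ∈ exchange {x} C K ↔ a ∈ K) := fun r hr t a ha _ hK =>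
    ite_mem_exchange_singleton_iff hK
      (Set.disjoint_left.1 hPC (mem_progAtoms_of_mem_occPart hr ha))
      fun hax => hy r hr t (hax ▸ ha)
  simp only [isModel_reduct_iff, forall_mem_splitAtom_iff, substAtom, Finset.forall_mem_image,
    Finset.exists_mem_image]
  refine forall₂_congr fun r hr => imp_congr ?_ (imp_congr ?_ ?_)
  · exact forall₂_congr fun c hc => not_congr (hmem r hr 2 c hc hM)
  · exact forall₂_congr fun b hb => hmem r hr 1 b hb hN
  · exact exists_congr fun a => and_congr_right fun ha => hmem r hr 0 a ha hN

theorem isModel_reduct_splitAtom_union_exchange_iff (hPC : Disjoint (progAtoms P) C)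
    (hy : ∀ r ∈ P, ∀ t, x ∈ occPart r t → y r t ∈ C) (hQ : Synchronizes Q C)
    (hM : Disjoint M C) (hN : Disjoint N C) :
    isModel (reduct (splitAtom P x y ∪ Q) (exchange {x} C M)) (exchange {x} C N) ↔
      isModel (reduct P M) N := by
  rw [isModel_reduct_union_iff, isModel_reduct_splitAtom_exchange_iff hPC hy hM hN,
    and_iff_left ((hQ _ _).2 (isSaturated_exchange hN))]

theorem isMinimalModel_reduct_splitAtom_union_exchange_iff (hC : C.Nonempty) (hxC : x ∉ C)
    (hPC : Disjoint (progAtoms P) C) (hy : ∀ r ∈ P, ∀ t, x ∈ occPart r t → y r t ∈ C)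
    (hQ : Synchronizes Q C) (hM : Disjoint M C) :
    isMinimalModel (reduct (splitAtom P x y ∪ Q) (exchange {x} C M)) (exchange {x} C M) ↔
      isMinimalModel (reduct P M) M := by
  have hmodel {N : Set A} (hN : Disjoint N C) :=
    isModel_reduct_splitAtom_union_exchange_iff hPC hy hQ hM hN
  have hback {N : Set A} (hN : Disjoint N C) : exchange C {x} (exchange {x} C N) = N :=
    exchange_exchange hC hN (isSaturated_singleton x N)
  refine and_congr (hmodel hM) ⟨fun hmin N hNM hN => ?_, fun hmin K hKM hK => ?_⟩
  · have hNC : Disjoint N C := hM.mono_left hNM.1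
    refine hmin _ ((exchange_mono hNM.1).ssubset_of_ne fun h => hNM.ne ?_) ((hmodel hNC).2 hN)
    rw [← hback hNC, h, hback hM]
  · have hxK : Disjoint K {x} :=
      (disjoint_exchange_left (Set.disjoint_singleton_left.2 hxC)).mono_left hKM.1
    have hforth : exchange {x} C (exchange C {x} K) = K :=
      exchange_exchange (Set.singleton_nonempty x) hxK
        ((hQ _ _).1 (isModel_reduct_union_iff.1 hK).2)
    have hsub : exchange C {x} K ⊆ M := hback hM ▸ exchange_mono hKM.1
    refine hmin _ (hsub.ssubset_of_ne fun h => hKM.ne ?_) ((hmodel (hM.mono_left hsub)).1 ?_)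
    · rw [← hforth, h]
    · rwa [hforth]

theorem notMem_of_isMinimalModel_reduct_splitAtom_union (hxC : x ∉ C)
    (hy : ∀ r ∈ P, ∀ t, x ∈ occPart r t → y r t ∈ C) (hQ : Synchronizes Q C)
    (hM : isMinimalModel (reduct (splitAtom P x y ∪ Q) M) M) : x ∉ M := by
  obtain ⟨hMP, hMQ⟩ := isModel_reduct_union_iff.1 hM.1
  suffices h : isModel (reduct (splitAtom P x y ∪ Q) M) (M ∩ {x}ᶜ) from
    fun hx => hM.subset_of_isModel_inter h hx rfl
  refine isModel_reduct_union_iff.2 ⟨isModel_reduct_iff.2 ?_, (hQ _ _).2 ?_⟩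
  · rintro _ ⟨r, hr, rfl⟩ hneg hpos
    obtain ⟨a, ha, haM⟩ :=
      isModel_reduct_iff.1 hMP _ ⟨r, hr, rfl⟩ hneg fun b hb => (hpos b hb).1
    have hx : x ∉ substAtom x (y r 0) r.head :=
      self_notMem_substAtom fun hx => ne_of_mem_of_not_mem (hy r hr 0 hx) hxC
    exact ⟨a, ha, haM, ne_of_mem_of_not_mem ha hx⟩
  · intro hne
    have hCM : C ⊆ M :=
      (hQ _ _).1 hMQ (hne.mono (Set.inter_subset_inter_left C Set.inter_subset_left))
    exact Set.subset_inter hCM (Set.subset_compl_singleton_iff.2 hxC)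

theorem exists_isAnswerSet_splitAtom_union_iff (hC : C.Nonempty) (hxC : x ∉ C)
    (hPC : Disjoint (progAtoms P) C) (hy : ∀ r ∈ P, ∀ t, x ∈ occPart r t → y r t ∈ C)
    (hQ : Synchronizes Q C) :
    (∃ M, isAnswerSet P M) ↔ ∃ M, isAnswerSet (splitAtom P x y ∪ Q) M := by
  have hmin {M : Set A} (hM : Disjoint M C) :=
    isMinimalModel_reduct_splitAtom_union_exchange_iff hC hxC hPC hy hQ hM
  constructor
  · rintro ⟨M, hMP, hM⟩
    exact ⟨exchange {x} C M, isAnswerSet_iff_isMinimalModel.2 ((hmin (hPC.mono_left hMP)).2 hM)⟩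
  · rintro ⟨K, -, hK⟩
    have hxK : x ∉ K := notMem_of_isMinimalModel_reduct_splitAtom_union hxC hy hQ hK
    have hforth : exchange {x} C (exchange C {x} K) = K :=
      exchange_exchange (Set.singleton_nonempty x) (Set.disjoint_singleton_right.2 hxK)
        ((hQ _ _).1 (isModel_reduct_union_iff.1 hK.1).2)
    have hdisj : Disjoint (exchange C {x} K) C :=
      disjoint_exchange_left (Set.disjoint_singleton_right.2 hxC)
    exact ⟨exchange C {x} K, isAnswerSet_iff_isMinimalModel.2 ((hmin hdisj).1 (by rwa [hforth]))⟩

end SplitAtom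

section Cycle

variable {A : Type} {ℓ : ℕ}

/-- The rules `f 1 ← f 0`, …, `f (ℓ - 1) ← f (ℓ - 2)` and `f 0 ← f (ℓ - 1)`, which make the atoms
`f 0`, …, `f (ℓ - 1)` equivalent. -/
def cycleRules (ℓ : ℕ) (f : ℕ → A) : Set (Rule A) :=
  {r' | ∃ j : ℕ, j + 1 < ℓ ∧ r' = ⟨{f (j + 1)}, {f j}, ∅⟩} ∪ {⟨{f 0}, {f (ℓ - 1)}, ∅⟩}

theorem isModel_reduct_cycleRules_iff {f : ℕ → A} {M N : Set A} :
    isModel (reduct (cycleRules ℓ f) M) N ↔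
      (∀ j, j + 1 < ℓ → f j ∈ N → f (j + 1) ∈ N) ∧ (f (ℓ - 1) ∈ N → f 0 ∈ N) := by
  rw [cycleRules, isModel_reduct_union_iff]
  refine and_congr ?_ (by simp [isModel_reduct_iff])
  rw [isModel_reduct_iff]
  constructor
  · intro h j hj
    simpa using h _ ⟨j, hj, rfl⟩
  · rintro h _ ⟨j, hj, rfl⟩
    simpa using h j hj

theorem synchronizes_cycleRules (hℓ : 0 < ℓ) (f : ℕ → A) :
    Synchronizes (cycleRules ℓ f) (f '' Set.Iio ℓ) := by
  intro M N
  rw [isModel_reduct_cycleRules_iff]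
  constructor
  · rintro ⟨hstep, hclose⟩ ⟨_, hi, i, hiℓ, rfl⟩
    have hforward {i j : ℕ} (hij : i ≤ j) (hj : j < ℓ) (hi : f i ∈ N) : f j ∈ N := by
      induction j, hij using Nat.le_induction with
      | base => exact hi
      | succ j _ ih => exact hstep j hj (ih (by omega))
    have h0 : f 0 ∈ N := hclose (hforward (Nat.le_sub_one_of_lt hiℓ) (by omega) hi)
    rintro _ ⟨j, hj, rfl⟩
    exact hforward (Nat.zero_le j) hj h0
  · intro hsat
    have hmem {i j : ℕ} (hi : i < ℓ) (hj : j < ℓ) (hiN : f i ∈ N) : f j ∈ N :=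
      hsat ⟨f i, hiN, i, hi, rfl⟩ ⟨j, hj, rfl⟩
    exact ⟨fun j hj => hmem (by omega) hj, hmem (by omega) hℓ⟩

end Cycle

theorem statement12_general {A : Type} [DecidableEq A] (P : Set (Rule A)) (x : A) (ℓ : ℕ)
    (hℓ : 0 < ℓ) (f : ℕ → A) (hfx : ∀ j, j < ℓ → f j ≠ x)
    (hf_fresh : ∀ j, j < ℓ → f j ∉ progAtoms P) (idx : Rule A → Fin 3 → ℕ)
    (hidx_lt : ∀ r ∈ P, ∀ t : Fin 3, x ∈ occPart r t → idx r t < ℓ) :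
    (∃ M, isAnswerSet P M) ↔
      ∃ M, isAnswerSet (splitAtom P x (fun r t => f (idx r t)) ∪ cycleRules ℓ f) M := by
  refine exists_isAnswerSet_splitAtom_union_iff (Set.Nonempty.image f ⟨0, hℓ⟩) ?_ ?_
    (fun r hr t hx => ⟨idx r t, hidx_lt r hr t hx, rfl⟩) (synchronizes_cycleRules hℓ f)
  · rintro ⟨j, hj, hjx⟩
    exact hfx j hj hjx
  · rw [Set.disjoint_right]
    rintro _ ⟨j, hj, rfl⟩
    exact hf_fresh j hj

/-- Atom-copying transformation: if the atom `x` has exactly `ℓ ≥ 3` occurrences in the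
program `P` (enumerated by `idx`, a bijection from the occurrences of `x` onto `{0,…,ℓ-1}`),
and `f 0, …, f (ℓ-1)` are pairwise distinct fresh atoms not occurring in `P`, then `P`
has an answer set iff the program `P'` obtained by replacing the `j`-th occurrence of `x`
by `f j` and adding the cycle rules `(f (j+1) ← f j)` for `j+1 < ℓ` and `(f 0 ← f (ℓ-1))`
has an answer set. -/
theorem statement12 {A : Type} [DecidableEq A] (P : Set (Rule A)) (hfin : P.Finite)
    (x : A) (ℓ : ℕ) (hℓ : 3 ≤ ℓ)
    (f : ℕ → A)
    (hf_inj : ∀ j j', j < ℓ → j' < ℓ → f j = f j' → j = j')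
    (hf_fresh : ∀ j, j < ℓ → f j ∉ progAtoms P)
    (idx : Rule A → Fin 3 → ℕ)
    (hidx_lt : ∀ r ∈ P, ∀ t : Fin 3, x ∈ occPart r t → idx r t < ℓ)
    (hidx_bij : ∀ j, j < ℓ → ∃! p : Rule A × Fin 3,
        (p.1 ∈ P ∧ x ∈ occPart p.1 p.2) ∧ idx p.1 p.2 = j) :
    ((∃ M : Set A, isAnswerSet P M) ↔
      (∃ M : Set A, isAnswerSet
        ({r' : Rule A | ∃ r ∈ P, r' = ⟨substAtom x (f (idx r 0)) r.head,
            substAtom x (f (idx r 1)) r.pos,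
            substAtom x (f (idx r 2)) r.neg⟩}
          ∪ {r' : Rule A | ∃ j : ℕ, j + 1 < ℓ ∧ r' = ⟨{f (j + 1)}, {f j}, ∅⟩}
          ∪ {(⟨{f 0}, {f (ℓ - 1)}, ∅⟩ : Rule A)}) M)) := by
  obtain ⟨⟨r, t⟩, ⟨⟨hr, hx⟩, -⟩, -⟩ := hidx_bij 0 (by omega)
  rw [Set.union_assoc]
  exact statement12_general P x ℓ (by omega) f (fun j hj => (ne_of_mem_of_not_mem
    (mem_progAtoms_of_mem_occPart hr hx) (hf_fresh j hj)).symm) hf_fresh idx hidx_lt
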